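/- Let η ≥ 1 and suppose for each k ∈ [K] an index b_k ∈ [K] with b_k ≤ k is given such that det(Λ_h^k) ≤ η · det(Λ_h^{b_k}) for all h ∈ [H] and k ∈ [K]. Then Σ_{k=1}^K Σ_{h=1}^H √(φ_h^{kᵀ} (Λ_h^{b_k})^{−1} φ_h^k) ≤ √(2 η d H T log(T/(dH) + 1)), where T = KH. -/

import Mathlib

open Matrix

lemma aux_cs {d : ℕ} {M : Matrix (Fin d) (Fin d) ℝ} (hM : M.PosSemidef) (x v : Fin d → ℝ) :
    (v ⬝ᵥ M *ᵥ x) ^ 2 ≤ (x ⬝ᵥ M *ᵥ x) * (v ⬝ᵥ M *ᵥ v) := by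
  have hsym : x ⬝ᵥ M *ᵥ v = v ⬝ᵥ M *ᵥ x := by
    have h1 : Mᵀ = M := by
      have h2 : M.IsSymm := by simpa using hM.1
      exact h2
    rw [dotProduct_mulVec, ← mulVec_transpose, h1, dotProduct_comm]
  have h := discrim_le_zero (a := v ⬝ᵥ M *ᵥ v) (b := 2 * (v ⬝ᵥ M *ᵥ x)) (c := x ⬝ᵥ M *ᵥ x) (by
    intro t
    have h0 := hM.dotProduct_mulVec_nonneg (x + t • v)
    simp only [star_trivial, mulVec_add, mulVec_smul, dotProduct_add, add_dotProduct,
      dotProduct_smul, smul_dotProduct, smul_eq_mul, hsym] at h0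
    nlinarith [h0])
  unfold discrim at h
  nlinarith [h]

lemma aux_psd {d : ℕ} (v : Fin d → ℝ) : (vecMulVec v v).PosSemidef := by
  simpa using posSemidef_vecMulVec_self_star v

lemma aux_det {d : ℕ} {B : Matrix (Fin d) (Fin d) ℝ} (hB : B.PosDef) (v : Fin d → ℝ) :
    (B + vecMulVec v v).det = B.det * (1 + v ⬝ᵥ B⁻¹ *ᵥ v) := by
  rw [vecMulVec_eq Unit, det_add_replicateCol_mul_replicateRow hB.det_pos.ne'.isUnit]
  congr 1
  rw [det_unique, dotProduct_mulVec, ← replicateRow_vecMul]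
  simp [replicateRow_mul_replicateCol_apply]

lemma aux_step {d : ℕ} {B : Matrix (Fin d) (Fin d) ℝ} (hB : B.PosDef) (v x : Fin d → ℝ) :
    B.det * (x ⬝ᵥ B⁻¹ *ᵥ x) ≤
      (B + vecMulVec v v).det * (x ⬝ᵥ (B + vecMulVec v v)⁻¹ *ᵥ x) := by
  rw [aux_det hB]
  have hA : (B + vecMulVec v v).PosDef := hB.add_posSemidef (aux_psd v)
  have hBu : IsUnit B.det := hB.det_pos.ne'.isUnit
  have hAu : IsUnit (B + vecMulVec v v).det := hA.det_pos.ne'.isUnit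
  set y := (B + vecMulVec v v)⁻¹ *ᵥ x with hy
  have hx : B *ᵥ y + (v ⬝ᵥ y) • v = x := by
    have : (B + vecMulVec v v) *ᵥ y = x := by
      rw [hy, mulVec_mulVec, mul_nonsing_inv _ hAu, one_mulVec]
    rw [add_mulVec, vecMulVec_mulVec] at this
    simpa using this
  have h1 : B⁻¹ *ᵥ x = y + (v ⬝ᵥ y) • (B⁻¹ *ᵥ v) := by
    conv_lhs => rw [← hx]
    rw [mulVec_add, mulVec_smul, mulVec_mulVec, nonsing_inv_mul _ hBu, one_mulVec]
  have hcs := aux_cs hB.inv.posSemidef x v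
  have hsym : x ⬝ᵥ B⁻¹ *ᵥ v = v ⬝ᵥ B⁻¹ *ᵥ x := by
    have h1 : (B⁻¹)ᵀ = B⁻¹ := by
      have h2 : (B⁻¹).IsSymm := by simpa using hB.inv.1
      exact h2
    rw [dotProduct_mulVec, ← mulVec_transpose, h1, dotProduct_comm]
  have hc : v ⬝ᵥ B⁻¹ *ᵥ x = (v ⬝ᵥ y) * (1 + v ⬝ᵥ B⁻¹ *ᵥ v) := by
    rw [h1, dotProduct_add, dotProduct_smul, smul_eq_mul]; ring
  have ha : x ⬝ᵥ B⁻¹ *ᵥ x = x ⬝ᵥ y + (v ⬝ᵥ y) * (v ⬝ᵥ B⁻¹ *ᵥ x) := by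
    conv_lhs => rw [h1, dotProduct_add, dotProduct_smul, smul_eq_mul, hsym]
  rw [mul_assoc]
  apply mul_le_mul_of_nonneg_left _ hB.det_pos.le
  generalize x ⬝ᵥ B⁻¹ *ᵥ x = a at *
  generalize v ⬝ᵥ B⁻¹ *ᵥ x = c at *
  generalize v ⬝ᵥ B⁻¹ *ᵥ v = b at *
  generalize v ⬝ᵥ y = s at *
  generalize x ⬝ᵥ y = r at *
  have : c ^ 2 = c * (s * (1 + b)) := by rw [← hc]; ring
  have e : (1 + b) * r = (1 + b) * a - c ^ 2 := by rw [this, ha]; ring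
  rw [e]; linarith

/-- Gram matrix. -/
noncomputable def gramL {d : ℕ} (v : ℕ → Fin d → ℝ) (n : ℕ) : Matrix (Fin d) (Fin d) ℝ :=
  1 + ∑ τ ∈ Finset.Icc 1 n, vecMulVec (v τ) (v τ)

lemma gramL_succ {d : ℕ} (v : ℕ → Fin d → ℝ) (n : ℕ) :
    gramL v (n + 1) = gramL v n + vecMulVec (v (n + 1)) (v (n + 1)) := by
  unfold gramL
  rw [Finset.sum_Icc_succ_top (by omega), add_assoc]

lemma gramL_psd {d : ℕ} (v : ℕ → Fin d → ℝ) (n : ℕ) :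
    (∑ τ ∈ Finset.Icc 1 n, vecMulVec (v τ) (v τ)).PosSemidef :=
  posSemidef_sum _ fun _ _ => aux_psd _

lemma gramL_pd {d : ℕ} (v : ℕ → Fin d → ℝ) (n : ℕ) : (gramL v n).PosDef :=
  PosDef.one.add_posSemidef (gramL_psd v n)

lemma gramL_mono {d : ℕ} (v : ℕ → Fin d → ℝ) (x : Fin d → ℝ) {m n : ℕ} (h : m ≤ n) :
    (gramL v m).det * (x ⬝ᵥ (gramL v m)⁻¹ *ᵥ x) ≤
      (gramL v n).det * (x ⬝ᵥ (gramL v n)⁻¹ *ᵥ x) := by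
  induction n, h using Nat.le_induction with
  | base => exact le_rfl
  | succ n _ ih =>
    refine ih.trans ?_
    rw [gramL_succ]
    exact aux_step (gramL_pd v n) _ _

lemma gramL_q_nonneg {d : ℕ} (v : ℕ → Fin d → ℝ) (x : Fin d → ℝ) (n : ℕ) :
    0 ≤ x ⬝ᵥ (gramL v n)⁻¹ *ᵥ x := by
  simpa using (gramL_pd v n).inv.posSemidef.dotProduct_mulVec_nonneg x

lemma gramL_q_le {d : ℕ} (v : ℕ → Fin d → ℝ) (x : Fin d → ℝ) (n : ℕ) (hx : x ⬝ᵥ x ≤ 1) :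
    x ⬝ᵥ (gramL v n)⁻¹ *ᵥ x ≤ 1 := by
  have hu := gramL_q_nonneg v x n
  set y := (gramL v n)⁻¹ *ᵥ x with hy
  have h1 : (gramL v n) *ᵥ y = x := by
    rw [hy, mulVec_mulVec, mul_nonsing_inv _ (gramL_pd v n).det_pos.ne'.isUnit, one_mulVec]
  have h2 : y ⬝ᵥ y ≤ x ⬝ᵥ y := by
    have h3 := (gramL_psd v n).dotProduct_mulVec_nonneg y
    have h4 : x ⬝ᵥ y = y ⬝ᵥ (gramL v n) *ᵥ y := by rw [h1, dotProduct_comm]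
    rw [h4]
    unfold gramL
    rw [add_mulVec, one_mulVec, dotProduct_add]
    simpa using h3
  have h5 : (x ⬝ᵥ y) ^ 2 ≤ (y ⬝ᵥ y) * (x ⬝ᵥ x) := by
    simpa using aux_cs (PosSemidef.one (n := Fin d) (R := ℝ)) y x
  have h6 : 0 ≤ y ⬝ᵥ y := by simpa using dotProduct_star_self_nonneg y
  nlinarith

lemma gramL_sum {d : ℕ} (v : ℕ → Fin d → ℝ) (n : ℕ) (hv : ∀ k ∈ Finset.Icc 1 n, v k ⬝ᵥ v k ≤ 1) :
    ∑ k ∈ Finset.Icc 1 n, v k ⬝ᵥ (gramL v (k - 1))⁻¹ *ᵥ v k ≤ 2 * Real.log (gramL v n).det := by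
  induction n with
  | zero => simp [gramL]
  | succ n ih =>
    rw [Finset.sum_Icc_succ_top (by omega), gramL_succ, aux_det (gramL_pd v n)]
    have ih' := ih fun k hk => hv k (by simp at hk ⊢; omega)
    have hu := gramL_q_nonneg v (v (n + 1)) n
    have hu1 := gramL_q_le v (v (n + 1)) n (hv _ (by simp))
    simp only [Nat.add_sub_cancel]
    rw [Real.log_mul (gramL_pd v n).det_pos.ne' (by positivity)]
    generalize v (n + 1) ⬝ᵥ (gramL v n)⁻¹ *ᵥ v (n + 1) = u at *
    have h := Real.one_sub_inv_le_log_of_pos (show 0 < 1 + u by positivity)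
    have h2 : u / 2 ≤ 1 - (1 + u)⁻¹ := by
      have : 1 - (1 + u)⁻¹ = u / (1 + u) := by field_simp; ring
      rw [this]
      exact div_le_div_of_nonneg_left hu (by positivity) (by linarith)
    linarith

lemma gramL_logdet {d : ℕ} (hd : 1 ≤ d) (v : ℕ → Fin d → ℝ) (n : ℕ)
    (hv : ∀ k ∈ Finset.Icc 1 n, v k ⬝ᵥ v k ≤ 1) :
    Real.log (gramL v n).det ≤ d * Real.log ((n : ℝ) / d + 1) := by
  have hd' : (0 : ℝ) < d := by exact_mod_cast hd
  have hpd := gramL_pd v n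
  have htr : (gramL v n).trace ≤ d + n := by
    unfold gramL
    rw [trace_add, trace_sum, trace_one]
    simp only [trace_vecMulVec, Fintype.card_fin]
    have := Finset.sum_le_sum hv
    simp at this
    linarith
  have h1 := hpd.1.det_eq_prod_eigenvalues
  have h2 := hpd.1.trace_eq_sum_eigenvalues
  simp only [RCLike.ofReal_real_eq_id, id] at h1 h2
  set c : ℝ := (n : ℝ) / d + 1 with hc
  have hcpos : 0 < c := by positivity
  rw [h1, Real.log_prod (fun i _ => (hpd.eigenvalues_pos i).ne')]
  have h3 : ∀ i, Real.log (hpd.1.eigenvalues i) ≤ Real.log c + (hpd.1.eigenvalues i / c - 1) := by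
    intro i
    have hp := hpd.eigenvalues_pos i
    have := Real.log_le_sub_one_of_pos (div_pos hp hcpos)
    rw [Real.log_div hp.ne' hcpos.ne'] at this
    linarith
  refine (Finset.sum_le_sum fun i _ => h3 i).trans ?_
  rw [Finset.sum_add_distrib, Finset.sum_sub_distrib, ← Finset.sum_div, ← h2]
  have h4 : (gramL v n).trace / c ≤ d := by
    rw [div_le_iff₀ hcpos, hc]
    have : (d : ℝ) * (n / d + 1) = d + n := by field_simp; ring
    linarith
  simp
  linarith



/-- Let `η ≥ 1` and suppose for each `k ∈ [K]` an index
`b_k ∈ [K]` with `b_k ≤ k` is given such that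
`det(Λ_h^k) ≤ η · det(Λ_h^{b_k})` for all `h ∈ [H]`, `k ∈ [K]`. Then
`∑_{k=1}^K ∑_{h=1}^H √(φ_h^kᵀ (Λ_h^{b_k})⁻¹ φ_h^k)
  ≤ √(2 η d H T log(T/(dH)+1))`, where `T = KH`. -/
theorem stmt_13 (d H K : ℕ) (hd : 1 ≤ d) (hH : 1 ≤ H) (hK : 1 ≤ K)
    (φ : ℕ → ℕ → Fin d → ℝ)
    (hφ : ∀ h ∈ Finset.Icc 1 H, ∀ k ∈ Finset.Icc 1 K,
      Real.sqrt (φ h k ⬝ᵥ φ h k) ≤ 1)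
    (Λ : ℕ → ℕ → Matrix (Fin d) (Fin d) ℝ)
    (hΛ : ∀ h k, Λ h k = (1 : Matrix (Fin d) (Fin d) ℝ) +
      ∑ τ ∈ Finset.Icc 1 (k - 1), Matrix.vecMulVec (φ h τ) (φ h τ))
    (η : ℝ) (hη : 1 ≤ η)
    (bk : ℕ → ℕ)
    (hbk : ∀ k ∈ Finset.Icc 1 K, bk k ∈ Finset.Icc 1 K ∧ bk k ≤ k)
    (hdet : ∀ h ∈ Finset.Icc 1 H, ∀ k ∈ Finset.Icc 1 K,
      (Λ h k).det ≤ η * (Λ h (bk k)).det)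
    (T : ℕ) (hT : T = K * H) :
    ∑ k ∈ Finset.Icc 1 K, ∑ h ∈ Finset.Icc 1 H,
        Real.sqrt (φ h k ⬝ᵥ (Λ h (bk k))⁻¹.mulVec (φ h k))
      ≤ Real.sqrt (2 * η * d * H * T * Real.log ((T : ℝ) / (d * H) + 1)) := by
  have hφ' : ∀ h ∈ Finset.Icc 1 H, ∀ k ∈ Finset.Icc 1 K, φ h k ⬝ᵥ φ h k ≤ 1 := by
    intro h hh k hk
    have := hφ h hh k hk
    rwa [Real.sqrt_le_one] at this
  have hL : ∀ h k, Λ h k = gramL (φ h) (k - 1) := fun h k => hΛ h k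
  have hd' : (0 : ℝ) < d := by exact_mod_cast hd
  have hH' : (0 : ℝ) < H := by exact_mod_cast hH
  have hratio : (T : ℝ) / (d * H) = (K : ℝ) / d := by
    rw [hT]; push_cast; field_simp
  have hterm : ∀ h ∈ Finset.Icc 1 H, ∀ k ∈ Finset.Icc 1 K,
      φ h k ⬝ᵥ (Λ h (bk k))⁻¹ *ᵥ (φ h k) ≤
        η * (φ h k ⬝ᵥ (gramL (φ h) (k - 1))⁻¹ *ᵥ (φ h k)) := by
    intro h hh k hk
    have h1 := hdet h hh k hk
    rw [hL, hL] at h1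
    rw [hL]
    have hb := (hbk k hk).2
    have h2 := gramL_mono (φ h) (φ h k) (show bk k - 1 ≤ k - 1 by omega)
    have h3 := gramL_q_nonneg (φ h) (φ h k) (k - 1)
    have h4 := (gramL_pd (φ h) (bk k - 1)).det_pos
    have h5 := mul_le_mul_of_nonneg_right h1 h3
    refine le_of_mul_le_mul_left ?_ h4
    calc _ ≤ _ := h2
      _ ≤ _ := h5
      _ = _ := by ring
  have hsum : ∑ h ∈ Finset.Icc 1 H, ∑ k ∈ Finset.Icc 1 K,
      φ h k ⬝ᵥ (Λ h (bk k))⁻¹ *ᵥ (φ h k) ≤ H * (η * (2 * (d * Real.log ((K : ℝ) / d + 1)))) := by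
    have : ∀ h ∈ Finset.Icc 1 H, ∑ k ∈ Finset.Icc 1 K,
        φ h k ⬝ᵥ (Λ h (bk k))⁻¹ *ᵥ (φ h k) ≤ η * (2 * (d * Real.log ((K : ℝ) / d + 1))) := by
      intro h hh
      refine (Finset.sum_le_sum fun k hk => hterm h hh k hk).trans ?_
      rw [← Finset.mul_sum]
      apply mul_le_mul_of_nonneg_left _ (by linarith)
      have := gramL_sum (φ h) K (hφ' h hh)
      have := gramL_logdet hd (φ h) K (hφ' h hh)
      linarith
    refine (Finset.sum_le_sum this).trans ?_
    simp
  apply Real.le_sqrt_of_sq_le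
  rw [← Finset.sum_product']
  refine sq_sum_le_card_mul_sum_sq.trans ?_
  rw [Finset.sum_product_right]
  have hsq : ∀ h k, Real.sqrt (φ h k ⬝ᵥ (Λ h (bk k))⁻¹ *ᵥ (φ h k)) ^ 2 =
      φ h k ⬝ᵥ (Λ h (bk k))⁻¹ *ᵥ (φ h k) := by
    intro h k
    rw [hL]
    exact Real.sq_sqrt (gramL_q_nonneg _ _ _)
  simp only [hsq, Finset.card_product, Nat.card_Icc, Nat.add_sub_cancel, ← hT]
  refine (mul_le_mul_of_nonneg_left hsum (Nat.cast_nonneg T)).trans (le_of_eq ?_)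
  rw [hratio]; ring
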